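/- Let X be a Banach space, U an evolution operator on X, and P a family of projectors compatible with U with complementary family Q and associated map V. Then (U,P) is exponentially dichotomic (i.e., (h,k)-dichotomic with h(t) = e^{αt}, k(t) = e^{βt} for some α, β > 0) if and only if there exist a family of norms {|||·|||_t : t ≥ 0} compatible with P and positive constants α, β such that for all t ≥ s ≥ 0 and x ∈ X: |||U(t,s)P(s)x|||_t ≤ e^{−α(t−s)}|||P(s)x|||_s and |||V(t,s)Q(t)x|||_s ≤ e^{−β(t−s)}|||Q(t)x|||_t. -/

import Mathlib

/-!
In the forward direction, absorb the nonuniform constant `N` into the norm: put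
`|||x|||_t = sup_{τ ≥ t} (h τ / h t) ‖U(τ,t) P(t) x‖ + sup_{0 ≤ r ≤ t} (k t / k r) ‖V(t,r) Q(t) x‖`.
The dichotomy inequalities bound both suprema, the terms `τ = t` and `r = t` give `‖x‖ ≤ |||x|||_t`,
and moving along the evolution replaces each orbit by a part of itself, so that no constant is lost.
Conversely, the contraction estimates and the comparison with `‖·‖` give back the dichotomy with
the comparison constant `N`.
-/

open Set Filter Real

variable {X : Type*} [NormedAddCommGroup X] [NormedSpace ℝ X] [CompleteSpace X]

/-- `U : Δ → B(X)` is an evolution operator on `X`. -/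
def EvolutionOperator (U : ℝ → ℝ → X →L[ℝ] X) : Prop :=
  (∀ t : ℝ, 0 ≤ t → U t t = ContinuousLinearMap.id ℝ X) ∧
  (∀ t s t₀ : ℝ, 0 ≤ t₀ → t₀ ≤ s → s ≤ t → U t t₀ = (U t s).comp (U s t₀))

/-- `P : ℝ₊ → B(X)` is a family of projectors on `X`. -/
def ProjectorFamily (P : ℝ → X →L[ℝ] X) : Prop :=
  ∀ t : ℝ, 0 ≤ t → (P t).comp (P t) = P t

/-- `P` is invariant for the evolution operator `U`. -/
def InvariantFor (U : ℝ → ℝ → X →L[ℝ] X) (P : ℝ → X →L[ℝ] X) : Prop :=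
  ∀ t s : ℝ, 0 ≤ s → s ≤ t → ∀ x : X, U t s (P s x) = P t (U t s x)

/-- `P` is compatible with `U` : it is invariant for `U` and for every `t ≥ s ≥ 0`
the restriction of `U t s` to `Ker P s` is an isomorphism from `Ker P s` onto
`Ker P t` (a bounded bijection between these closed subspaces of the Banach
space `X`, hence an isomorphism). -/
def CompatibleWith (U : ℝ → ℝ → X →L[ℝ] X) (P : ℝ → X →L[ℝ] X) : Prop :=
  InvariantFor U P ∧
  ∀ t s : ℝ, 0 ≤ s → s ≤ t →
    Set.BijOn (U t s) {x : X | P s x = 0} {x : X | P t x = 0}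

/-- a growth rate : a nondecreasing map `ℝ₊ → [1, ∞)` tending to `∞`. -/
def GrowthRate (h : ℝ → ℝ) : Prop :=
  MonotoneOn h (Ici (0 : ℝ)) ∧ (∀ t : ℝ, 0 ≤ t → 1 ≤ h t) ∧ Tendsto h atTop atTop

/-- a nondecreasing map `ℝ₊ → [1, ∞)`. -/
def Nondecr1 (N : ℝ → ℝ) : Prop :=
  MonotoneOn N (Ici (0 : ℝ)) ∧ ∀ t : ℝ, 0 ≤ t → 1 ≤ N t

/-- the pair `(U, P)` is (nonuniformly) `(h,k)`-dichotomic; here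
`Q t x = x - P t x` is the complementary family of projectors. -/
def Dichotomic (U : ℝ → ℝ → X →L[ℝ] X) (P : ℝ → X →L[ℝ] X) (h k : ℝ → ℝ) : Prop :=
  ∃ N : ℝ → ℝ, Nondecr1 N ∧
    ∀ t s : ℝ, 0 ≤ s → s ≤ t → ∀ x : X,
      h t * ‖U t s (P s x)‖ ≤ N s * (h s * ‖P s x‖) ∧
      k t * ‖x - P s x‖ ≤ N t * (k s * ‖U t s (x - P s x)‖)

/-- the pair `(U, P)` has `(h,k)`-growth. -/
def HasGrowth (U : ℝ → ℝ → X →L[ℝ] X) (P : ℝ → X →L[ℝ] X) (h k : ℝ → ℝ) : Prop :=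
  ∃ M : ℝ → ℝ, Nondecr1 M ∧
    ∀ t s : ℝ, 0 ≤ s → s ≤ t → ∀ x : X,
      h s * ‖U t s (P s x)‖ ≤ M s * (h t * ‖P s x‖) ∧
      k s * ‖x - P s x‖ ≤ M t * (k t * ‖U t s (x - P s x)‖)

/-- `f : X → ℝ` is a norm on `X`. -/
def IsNormOn (f : X → ℝ) : Prop :=
  (∀ x : X, 0 ≤ f x) ∧ (∀ x : X, f x = 0 ↔ x = 0) ∧
  (∀ (a : ℝ) (x : X), f (a • x) = |a| * f x) ∧
  (∀ x y : X, f (x + y) ≤ f x + f y)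

/-- a family of norms `{‖·‖_t : t ≥ 0}` compatible with the family of
projectors `P` (with complementary family `Q t x = x - P t x`). -/
def CompatibleNorms (P : ℝ → X →L[ℝ] X) (nn : ℝ → X → ℝ) : Prop :=
  (∀ t : ℝ, 0 ≤ t → IsNormOn (nn t)) ∧
  ∃ N : ℝ → ℝ, Nondecr1 N ∧
    ∀ t : ℝ, 0 ≤ t → ∀ x : X,
      ‖x‖ ≤ nn t x ∧ nn t x ≤ N t * (‖P t x‖ + ‖x - P t x‖)

section WeightedSup

variable {𝕜 E F ι : Type*} [NormedField 𝕜] [AddCommGroup E] [Module 𝕜 E]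
  [SeminormedAddCommGroup F] [NormedSpace 𝕜 F] {w : ι → ℝ} {T : ι → E →ₗ[𝕜] F}

/-- The seminorm `x ↦ ⨆ i, w i * ‖T i x‖` attached to a family of linear maps `T` with
nonnegative weights `w`. It is the junk value `0` when the family is not pointwise bounded. -/
noncomputable def weightedSupSeminorm (w : ι → ℝ) (T : ι → E →ₗ[𝕜] F) : Seminorm 𝕜 E :=
  ⨆ i, (w i).toNNReal • (normSeminorm 𝕜 F).comp (T i)

theorem weightedSupSeminorm_apply (hw : ∀ i, 0 ≤ w i)
    (hT : ∀ x, BddAbove (range fun i => w i * ‖T i x‖)) (x : E) :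
    weightedSupSeminorm w T x = ⨆ i, w i * ‖T i x‖ := by
  have eval (i : ι) (y : E) :
      ((w i).toNNReal • (normSeminorm 𝕜 F).comp (T i)) y = w i * ‖T i y‖ := by
    simp [NNReal.smul_def, hw i]
  have bdd : BddAbove (range fun i => (w i).toNNReal • (normSeminorm 𝕜 F).comp (T i)) :=
    Seminorm.bddAbove_range_iff.2 fun y => by simpa only [eval] using hT y
  simp only [weightedSupSeminorm, Seminorm.iSup_apply bdd, eval]

theorem le_weightedSupSeminorm (hw : ∀ i, 0 ≤ w i)
    (hT : ∀ x, BddAbove (range fun i => w i * ‖T i x‖)) (x : E) (i : ι) :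
    w i * ‖T i x‖ ≤ weightedSupSeminorm w T x :=
  (le_ciSup (hT x) i).trans_eq (weightedSupSeminorm_apply hw hT x).symm

theorem weightedSupSeminorm_le [Nonempty ι] (hw : ∀ i, 0 ≤ w i)
    (hT : ∀ x, BddAbove (range fun i => w i * ‖T i x‖)) {x : E} {c : ℝ}
    (hc : ∀ i, w i * ‖T i x‖ ≤ c) : weightedSupSeminorm w T x ≤ c :=
  (weightedSupSeminorm_apply hw hT x).trans_le (ciSup_le hc)

end WeightedSup

variable {𝕜 E : Type*} [NormedField 𝕜] [SeminormedAddCommGroup E] [NormedSpace 𝕜 E]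
  {U V : ℝ → ℝ → E →ₗ[𝕜] E} {P : ℝ → E →ₗ[𝕜] E} {h k N : ℝ → ℝ} {nn : ℝ → E → ℝ}
  {r s t : ℝ}

/-- An evolution operator `U` on `ℝ₊` that splits along a family of projectors `P`, together with
the inverse `V t s` of `U t s` from the kernel of `P t` to the kernel of `P s`. The complementary
projector is written `x - P t x`, and `V t s` is a total map whose values matter only on the kernel
of `P t`. -/
structure EvolutionSplitting (U V : ℝ → ℝ → E →ₗ[𝕜] E) (P : ℝ → E →ₗ[𝕜] E) : Prop where
  map_self : ∀ t, 0 ≤ t → ∀ x, U t t x = x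
  map_map : ∀ t s r, 0 ≤ r → r ≤ s → s ≤ t → ∀ x, U t s (U s r x) = U t r x
  proj_proj : ∀ t, 0 ≤ t → ∀ x, P t (P t x) = P t x
  map_proj : ∀ t s, 0 ≤ s → s ≤ t → ∀ x, U t s (P s x) = P t (U t s x)
  map_inv : ∀ t s, 0 ≤ s → s ≤ t → ∀ x, U t s (V t s (x - P t x)) = x - P t x
  inv_map : ∀ t s, 0 ≤ s → s ≤ t → ∀ x, V t s (U t s (x - P s x)) = x - P s x
  proj_inv : ∀ t s, 0 ≤ s → s ≤ t → ∀ x, P s (V t s (x - P t x)) = 0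

/-- The two inequalities of an `(h, k)`-dichotomy of `(U, P)`, with the nonuniform constant `N`. -/
def DichotomyBound (U : ℝ → ℝ → E →ₗ[𝕜] E) (P : ℝ → E →ₗ[𝕜] E) (h k N : ℝ → ℝ) : Prop :=
  ∀ t s : ℝ, 0 ≤ s → s ≤ t → ∀ x : E,
    h t * ‖U t s (P s x)‖ ≤ N s * (h s * ‖P s x‖) ∧
    k t * ‖x - P s x‖ ≤ N t * (k s * ‖U t s (x - P s x)‖)

/-- A family of seminorms compatible with the projectors `P`. When the ambient seminorm is a norm,
the bound `‖x‖ ≤ nn t x` turns its members into norms. -/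
def CompatibleSeminorms (P : ℝ → E →ₗ[𝕜] E) (nn : ℝ → E → ℝ) : Prop :=
  (∀ t : ℝ, 0 ≤ t → ∃ p : Seminorm 𝕜 E, ⇑p = nn t) ∧
  ∃ N : ℝ → ℝ, Nondecr1 N ∧
    ∀ t : ℝ, 0 ≤ t → ∀ x : E,
      ‖x‖ ≤ nn t x ∧ nn t x ≤ N t * (‖P t x‖ + ‖x - P t x‖)

/-- With respect to the family `nn`, the evolution contracts forwards with rate `h` on the ranges
of the projectors and backwards with rate `k` on their kernels, without any further constant. -/
def ContractsWithRates (U V : ℝ → ℝ → E →ₗ[𝕜] E) (P : ℝ → E →ₗ[𝕜] E) (nn : ℝ → E → ℝ)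
    (h k : ℝ → ℝ) : Prop :=
  ∀ t s : ℝ, 0 ≤ s → s ≤ t → ∀ x : E,
    h t * nn t (U t s (P s x)) ≤ h s * nn s (P s x) ∧
    k t * nn s (V t s (x - P t x)) ≤ k s * nn t (x - P t x)

namespace EvolutionSplitting

theorem proj_compl (H : EvolutionSplitting U V P) (ht : 0 ≤ t) (x : E) :
    P t (x - P t x) = 0 := by
  rw [map_sub, H.proj_proj t ht, sub_self]

theorem proj_map_proj (H : EvolutionSplitting U V P) (hs : 0 ≤ s) (hst : s ≤ t) (x : E) :
    P t (U t s (P s x)) = U t s (P s x) := by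
  rw [← H.map_proj t s hs hst, H.proj_proj s hs]

theorem proj_map_compl (H : EvolutionSplitting U V P) (hs : 0 ≤ s) (hst : s ≤ t) (x : E) :
    P t (U t s (x - P s x)) = 0 := by
  rw [← H.map_proj t s hs hst, H.proj_compl hs, map_zero]

theorem map_inv_of_proj_eq_zero (H : EvolutionSplitting U V P) (hs : 0 ≤ s) (hst : s ≤ t) {y : E}
    (hy : P t y = 0) : U t s (V t s y) = y := by
  simpa only [hy, sub_zero] using H.map_inv t s hs hst y

theorem inv_map_of_proj_eq_zero (H : EvolutionSplitting U V P) (hs : 0 ≤ s) (hst : s ≤ t) {y : E}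
    (hy : P s y = 0) : V t s (U t s y) = y := by
  simpa only [hy, sub_zero] using H.inv_map t s hs hst y

theorem proj_inv_of_proj_eq_zero (H : EvolutionSplitting U V P) (hs : 0 ≤ s) (hst : s ≤ t) {y : E}
    (hy : P t y = 0) : P s (V t s y) = 0 := by
  simpa only [hy, sub_zero] using H.proj_inv t s hs hst y

theorem inv_self_of_proj_eq_zero (H : EvolutionSplitting U V P) (ht : 0 ≤ t) {y : E}
    (hy : P t y = 0) : V t t y = y := by
  simpa only [H.map_self t ht] using H.inv_map_of_proj_eq_zero ht le_rfl hy

theorem inv_inv_of_proj_eq_zero (H : EvolutionSplitting U V P) (hr : 0 ≤ r) (hrs : r ≤ s)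
    (hst : s ≤ t) {y : E} (hy : P t y = 0) : V s r (V t s y) = V t r y := by
  have hs : 0 ≤ s := hr.trans hrs
  have hw : P s (V t s y) = 0 := H.proj_inv_of_proj_eq_zero hs hst hy
  have hz : P r (V s r (V t s y)) = 0 := H.proj_inv_of_proj_eq_zero hr hrs hw
  have map_eq : U t r (V s r (V t s y)) = y := by
    rw [← H.map_map t s r hr hrs hst, H.map_inv_of_proj_eq_zero hr hrs hw,
      H.map_inv_of_proj_eq_zero hs hst hy]
  rw [← H.inv_map_of_proj_eq_zero hr (hrs.trans hst) hz, map_eq]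

end EvolutionSplitting

/-- The supremum of the forward orbit `τ ↦ h τ * ‖U τ t (P t x)‖`, `t ≤ τ`. -/
noncomputable def forwardSeminorm (U : ℝ → ℝ → E →ₗ[𝕜] E) (P : ℝ → E →ₗ[𝕜] E) (h : ℝ → ℝ)
    (t : ℝ) : Seminorm 𝕜 E :=
  weightedSupSeminorm (fun τ : Ici t => h τ) fun τ => U τ t ∘ₗ P t

/-- The supremum of the backward orbit `r ↦ (k r)⁻¹ * ‖V t r (x - P t x)‖`, `0 ≤ r ≤ t`. -/
noncomputable def backwardSeminorm (V : ℝ → ℝ → E →ₗ[𝕜] E) (P : ℝ → E →ₗ[𝕜] E) (k : ℝ → ℝ)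
    (t : ℝ) : Seminorm 𝕜 E :=
  weightedSupSeminorm (fun r : Icc 0 t => (k r)⁻¹) fun r => V t r ∘ₗ (LinearMap.id - P t)

/-- The adapted seminorm at time `t`, in which a dichotomic evolution contracts without
constants. The factors `(h t)⁻¹` and `k t` normalize both orbits to weight `1` at time `t`. -/
noncomputable def adaptedSeminorm (U V : ℝ → ℝ → E →ₗ[𝕜] E) (P : ℝ → E →ₗ[𝕜] E) (h k : ℝ → ℝ)
    (t : ℝ) : Seminorm 𝕜 E :=
  (h t)⁻¹.toNNReal • forwardSeminorm U P h t + (k t).toNNReal • backwardSeminorm V P k t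

theorem adaptedSeminorm_apply (hh : 0 < h t) (hk : 0 < k t) (x : E) :
    adaptedSeminorm U V P h k t x =
      (h t)⁻¹ * forwardSeminorm U P h t x + k t * backwardSeminorm V P k t x := by
  simp [adaptedSeminorm, NNReal.smul_def, hh.le, hk.le]

namespace DichotomyBound

section Forward

variable (hD : DichotomyBound U P h k N) (hh : ∀ t, 0 ≤ t → 0 < h t)
include hD

theorem bddAbove_forward (ht : 0 ≤ t) (x : E) :
    BddAbove (range fun τ : Ici t => h τ * ‖(U τ t ∘ₗ P t) x‖) :=
  ⟨N t * (h t * ‖P t x‖), by rintro _ ⟨τ, rfl⟩; exact (hD τ t ht τ.2 x).1⟩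

include hh

theorem forwardSeminorm_le (ht : 0 ≤ t) (x : E) :
    forwardSeminorm U P h t x ≤ N t * (h t * ‖P t x‖) :=
  weightedSupSeminorm_le (fun τ : Ici t => (hh τ (ht.trans τ.2)).le) (hD.bddAbove_forward ht)
    fun τ => (hD τ t ht τ.2 x).1

theorem forwardSeminorm_eq_zero (ht : 0 ≤ t) {x : E} (hx : P t x = 0) :
    forwardSeminorm U P h t x = 0 :=
  (apply_nonneg _ x).antisymm' <| by
    simpa only [hx, norm_zero, mul_zero] using hD.forwardSeminorm_le hh ht x

theorem le_forwardSeminorm (hs : 0 ≤ s) (hst : s ≤ t) (x : E) :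
    h t * ‖U t s (P s x)‖ ≤ forwardSeminorm U P h s x :=
  le_weightedSupSeminorm (fun τ : Ici s => (hh τ (hs.trans τ.2)).le) (hD.bddAbove_forward hs) x
    ⟨t, hst⟩

theorem forwardSeminorm_map_le (H : EvolutionSplitting U V P) (hs : 0 ≤ s) (hst : s ≤ t) (x : E) :
    forwardSeminorm U P h t (U t s (P s x)) ≤ forwardSeminorm U P h s (P s x) := by
  have ht : 0 ≤ t := hs.trans hst
  refine weightedSupSeminorm_le (fun τ : Ici t => (hh τ (ht.trans τ.2)).le) (hD.bddAbove_forward ht)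
    fun ⟨τ, hτ⟩ => ?_
  have orbit_eq : (U τ t ∘ₗ P t) (U t s (P s x)) = U τ s (P s (P s x)) := by
    rw [LinearMap.comp_apply, H.proj_map_proj hs hst, H.map_map τ t s hs hst hτ, H.proj_proj s hs]
  rw [orbit_eq]
  exact hD.le_forwardSeminorm hh hs (hst.trans hτ) (P s x)

theorem adaptedSeminorm_of_proj_eq_zero (hk : 0 < k t) (ht : 0 ≤ t) {x : E} (hx : P t x = 0) :
    adaptedSeminorm U V P h k t x = k t * backwardSeminorm V P k t x := by
  rw [adaptedSeminorm_apply (hh t ht) hk, hD.forwardSeminorm_eq_zero hh ht hx, mul_zero,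
    zero_add]

end Forward

section Backward

variable (hD : DichotomyBound U P h k N) (H : EvolutionSplitting U V P)
  (hk : ∀ t, 0 ≤ t → 0 < k t)
include hD H hk

theorem inv_mul_norm_inv_le (hs : 0 ≤ s) (hst : s ≤ t) (x : E) :
    (k s)⁻¹ * ‖V t s (x - P t x)‖ ≤ N t * ((k t)⁻¹ * ‖x - P t x‖) := by
  have bound : k t * ‖V t s (x - P t x)‖ ≤ N t * (k s * ‖x - P t x‖) := by
    simpa only [H.proj_inv t s hs hst, sub_zero, H.map_inv t s hs hst]
      using (hD t s hs hst (V t s (x - P t x))).2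
  have hks : 0 < k s := hk s hs
  have hkt : 0 < k t := hk t (hs.trans hst)
  calc (k s)⁻¹ * ‖V t s (x - P t x)‖
      = (k s)⁻¹ * (k t)⁻¹ * (k t * ‖V t s (x - P t x)‖) := by field_simp
    _ ≤ (k s)⁻¹ * (k t)⁻¹ * (N t * (k s * ‖x - P t x‖)) := by gcongr
    _ = N t * ((k t)⁻¹ * ‖x - P t x‖) := by field_simp

theorem bddAbove_backward (x : E) :
    BddAbove (range fun r : Icc 0 t => (k r)⁻¹ * ‖(V t r ∘ₗ (LinearMap.id - P t)) x‖) :=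
  ⟨N t * ((k t)⁻¹ * ‖x - P t x‖), by
    rintro _ ⟨r, rfl⟩; exact hD.inv_mul_norm_inv_le H hk r.2.1 r.2.2 x⟩

theorem backwardSeminorm_le (ht : 0 ≤ t) (x : E) :
    backwardSeminorm V P k t x ≤ N t * ((k t)⁻¹ * ‖x - P t x‖) :=
  have : Nonempty (Icc 0 t) := ⟨⟨t, ht, le_rfl⟩⟩
  weightedSupSeminorm_le (fun r : Icc 0 t => (inv_pos.2 (hk r r.2.1)).le)
    (hD.bddAbove_backward H hk) fun r => hD.inv_mul_norm_inv_le H hk r.2.1 r.2.2 x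

theorem backwardSeminorm_eq_zero (ht : 0 ≤ t) {x : E} (hx : P t x = x) :
    backwardSeminorm V P k t x = 0 :=
  (apply_nonneg _ x).antisymm' <| by
    simpa only [hx, sub_self, norm_zero, mul_zero] using hD.backwardSeminorm_le H hk ht x

theorem le_backwardSeminorm (hs : 0 ≤ s) (hst : s ≤ t) (x : E) :
    (k s)⁻¹ * ‖V t s (x - P t x)‖ ≤ backwardSeminorm V P k t x :=
  le_weightedSupSeminorm (fun r : Icc 0 t => (inv_pos.2 (hk r r.2.1)).le)
    (hD.bddAbove_backward H hk) x ⟨s, hs, hst⟩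

theorem backwardSeminorm_inv_le (hs : 0 ≤ s) (hst : s ≤ t) {y : E} (hy : P t y = 0) :
    backwardSeminorm V P k s (V t s y) ≤ backwardSeminorm V P k t y := by
  have : Nonempty (Icc 0 s) := ⟨⟨s, hs, le_rfl⟩⟩
  refine weightedSupSeminorm_le (fun r : Icc 0 s => (inv_pos.2 (hk r r.2.1)).le)
    (hD.bddAbove_backward H hk) fun ⟨r, hr, hrs⟩ => ?_
  have orbit_eq : (V s r ∘ₗ (LinearMap.id - P s)) (V t s y) = V t r (y - P t y) := by
    rw [LinearMap.comp_apply, LinearMap.sub_apply, LinearMap.id_apply,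
      H.proj_inv_of_proj_eq_zero hs hst hy, sub_zero, hy, sub_zero,
      H.inv_inv_of_proj_eq_zero hr hrs hst hy]
  rw [orbit_eq]
  exact hD.le_backwardSeminorm H hk hr (hrs.trans hst) y

end Backward

section Adapted

variable (hD : DichotomyBound U P h k N) (H : EvolutionSplitting U V P)
  (hh : ∀ t, 0 ≤ t → 0 < h t) (hk : ∀ t, 0 ≤ t → 0 < k t)
include hD H hh hk

theorem norm_le_adaptedSeminorm (ht : 0 ≤ t) (x : E) : ‖x‖ ≤ adaptedSeminorm U V P h k t x := by
  have forward : ‖P t x‖ ≤ (h t)⁻¹ * forwardSeminorm U P h t x := by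
    rw [le_inv_mul_iff₀ (hh t ht)]
    simpa only [H.map_self t ht] using hD.le_forwardSeminorm hh ht le_rfl x
  have backward : ‖x - P t x‖ ≤ k t * backwardSeminorm V P k t x := by
    rw [← inv_mul_le_iff₀ (hk t ht)]
    simpa only [H.inv_self_of_proj_eq_zero ht (H.proj_compl ht x)]
      using hD.le_backwardSeminorm H hk ht le_rfl x
  calc ‖x‖ = ‖P t x + (x - P t x)‖ := by rw [add_sub_cancel]
    _ ≤ ‖P t x‖ + ‖x - P t x‖ := norm_add_le _ _
    _ ≤ adaptedSeminorm U V P h k t x := by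
      rw [adaptedSeminorm_apply (hh t ht) (hk t ht)]
      exact add_le_add forward backward

theorem adaptedSeminorm_le (ht : 0 ≤ t) (x : E) :
    adaptedSeminorm U V P h k t x ≤ N t * (‖P t x‖ + ‖x - P t x‖) := by
  have hht : 0 < h t := hh t ht
  have hkt : 0 < k t := hk t ht
  calc adaptedSeminorm U V P h k t x
      = (h t)⁻¹ * forwardSeminorm U P h t x + k t * backwardSeminorm V P k t x :=
        adaptedSeminorm_apply hht hkt x
    _ ≤ (h t)⁻¹ * (N t * (h t * ‖P t x‖)) + k t * (N t * ((k t)⁻¹ * ‖x - P t x‖)) := by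
        gcongr
        · exact hD.forwardSeminorm_le hh ht x
        · exact hD.backwardSeminorm_le H hk ht x
    _ = N t * (‖P t x‖ + ‖x - P t x‖) := by field_simp

theorem compatibleSeminorms_adapted (hN : Nondecr1 N) :
    CompatibleSeminorms P fun t => adaptedSeminorm U V P h k t :=
  ⟨fun _ _ => ⟨_, rfl⟩, N, hN, fun _ ht x =>
    ⟨hD.norm_le_adaptedSeminorm H hh hk ht x, hD.adaptedSeminorm_le H hh hk ht x⟩⟩

theorem mul_adaptedSeminorm_of_proj_eq (ht : 0 ≤ t) {x : E} (hx : P t x = x) :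
    h t * adaptedSeminorm U V P h k t x = forwardSeminorm U P h t x := by
  rw [adaptedSeminorm_apply (hh t ht) (hk t ht), hD.backwardSeminorm_eq_zero H hk ht hx, mul_zero,
    add_zero, mul_inv_cancel_left₀ (hh t ht).ne']

theorem contractsWithRates_adapted :
    ContractsWithRates U V P (fun t => adaptedSeminorm U V P h k t) h k := by
  intro t s hs hst x
  have ht : 0 ≤ t := hs.trans hst
  constructor
  · rw [hD.mul_adaptedSeminorm_of_proj_eq H hh hk ht (H.proj_map_proj hs hst x),
      hD.mul_adaptedSeminorm_of_proj_eq H hh hk hs (H.proj_proj s hs x)]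
    exact hD.forwardSeminorm_map_le hh H hs hst x
  · have hks : 0 < k s := hk s hs
    have hkt : 0 < k t := hk t ht
    beta_reduce
    rw [hD.adaptedSeminorm_of_proj_eq_zero hh hks hs (H.proj_inv t s hs hst x),
      hD.adaptedSeminorm_of_proj_eq_zero hh hkt ht (H.proj_compl ht x), mul_left_comm]
    gcongr
    exact hD.backwardSeminorm_inv_le H hk hs hst (H.proj_compl ht x)

end Adapted

end DichotomyBound

theorem ContractsWithRates.dichotomyBound (hc : ContractsWithRates U V P nn h k)
    (H : EvolutionSplitting U V P) (hh : ∀ t, 0 ≤ t → 0 ≤ h t) (hk : ∀ t, 0 ≤ t → 0 ≤ k t)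
    (hnn : ∀ t, 0 ≤ t → ∀ x, ‖x‖ ≤ nn t x ∧ nn t x ≤ N t * (‖P t x‖ + ‖x - P t x‖)) :
    DichotomyBound U P h k N := by
  intro t s hs hst x
  have ht : 0 ≤ t := hs.trans hst
  have hhs : 0 ≤ h s := hh s hs
  have hht : 0 ≤ h t := hh t ht
  have hks : 0 ≤ k s := hk s hs
  have hkt : 0 ≤ k t := hk t ht
  constructor
  · have upper : nn s (P s x) ≤ N s * ‖P s x‖ := by
      simpa only [H.proj_proj s hs, sub_self, norm_zero, add_zero] using (hnn s hs (P s x)).2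
    calc h t * ‖U t s (P s x)‖ ≤ h t * nn t (U t s (P s x)) := by gcongr; exact (hnn t ht _).1
      _ ≤ h s * nn s (P s x) := (hc t s hs hst x).1
      _ ≤ h s * (N s * ‖P s x‖) := by gcongr
      _ = N s * (h s * ‖P s x‖) := mul_left_comm _ _ _
  · set y := U t s (x - P s x) with hy
    have hPy : P t y = 0 := H.proj_map_compl hs hst x
    have upper : nn t y ≤ N t * ‖y‖ := by
      simpa only [hPy, norm_zero, sub_zero, zero_add] using (hnn t ht y).2
    have contract : k t * nn s (V t s y) ≤ k s * nn t y := by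
      simpa only [hPy, sub_zero] using (hc t s hs hst y).2
    calc k t * ‖x - P s x‖ = k t * ‖V t s y‖ := by rw [hy, H.inv_map t s hs hst]
      _ ≤ k t * nn s (V t s y) := by gcongr; exact (hnn s hs _).1
      _ ≤ k s * nn t y := contract
      _ ≤ k s * (N t * ‖y‖) := by gcongr
      _ = N t * (k s * ‖y‖) := mul_left_comm _ _ _

theorem EvolutionSplitting.exists_dichotomyBound_iff (H : EvolutionSplitting U V P)
    (hh : ∀ t, 0 ≤ t → 0 < h t) (hk : ∀ t, 0 ≤ t → 0 < k t) :
    (∃ N : ℝ → ℝ, Nondecr1 N ∧ DichotomyBound U P h k N) ↔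
      ∃ nn : ℝ → E → ℝ, CompatibleSeminorms P nn ∧ ContractsWithRates U V P nn h k := by
  constructor
  · rintro ⟨N, hN, hD⟩
    exact ⟨_, hD.compatibleSeminorms_adapted H hh hk hN, hD.contractsWithRates_adapted H hh hk⟩
  · rintro ⟨nn, ⟨-, N, hN, hnn⟩, hc⟩
    exact ⟨N, hN, hc.dichotomyBound H (fun t ht => (hh t ht).le) (fun t ht => (hk t ht).le) hnn⟩

theorem exp_mul_mul_le_exp_mul_mul_iff {a A B : ℝ} :
    exp (a * t) * A ≤ exp (a * s) * B ↔ A ≤ exp (-a * (t - s)) * B := by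
  have exp_eq : exp (-a * (t - s)) = (exp (a * t))⁻¹ * exp (a * s) := by
    rw [← exp_neg, ← exp_add]; ring_nf
  rw [exp_eq, mul_assoc, le_inv_mul_iff₀ (exp_pos _)]

theorem contractsWithRates_exp_iff {α β : ℝ} :
    ContractsWithRates U V P nn (fun t => exp (α * t)) (fun t => exp (β * t)) ↔
      ∀ t s : ℝ, 0 ≤ s → s ≤ t → ∀ x : E,
        nn t (U t s (P s x)) ≤ exp (-α * (t - s)) * nn s (P s x) ∧
        nn s (V t s (x - P t x)) ≤ exp (-β * (t - s)) * nn t (x - P t x) := by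
  simp only [ContractsWithRates, exp_mul_mul_le_exp_mul_mul_iff]

theorem stmt8_general (H : EvolutionSplitting U V P) :
    (∃ α β : ℝ, 0 < α ∧ 0 < β ∧ ∃ N : ℝ → ℝ, Nondecr1 N ∧
      DichotomyBound U P (fun t => exp (α * t)) (fun t => exp (β * t)) N) ↔
      ∃ nn : ℝ → E → ℝ, CompatibleSeminorms P nn ∧
        ∃ α β : ℝ, 0 < α ∧ 0 < β ∧
          ∀ t s : ℝ, 0 ≤ s → s ≤ t → ∀ x : E,
            nn t (U t s (P s x)) ≤ exp (-α * (t - s)) * nn s (P s x) ∧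
            nn s (V t s (x - P t x)) ≤ exp (-β * (t - s)) * nn t (x - P t x) := by
  simp only [← contractsWithRates_exp_iff,
    H.exists_dichotomyBound_iff (fun _ _ => exp_pos _) (fun _ _ => exp_pos _)]
  constructor
  · rintro ⟨α, β, hα, hβ, nn, hnn, hc⟩
    exact ⟨nn, hnn, α, β, hα, hβ, hc⟩
  · rintro ⟨nn, hnn, α, β, hα, hβ, hc⟩
    exact ⟨α, β, hα, hβ, nn, hnn, hc⟩

section RealNormedSpace

variable {Y : Type*} [NormedAddCommGroup Y] [NormedSpace ℝ Y]

theorem isNormOn_iff {f : Y → ℝ} :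
    IsNormOn f ↔ (∃ p : Seminorm ℝ Y, ⇑p = f) ∧ ∀ x, f x = 0 → x = 0 := by
  constructor
  · rintro ⟨-, eq_zero, smul, add⟩
    exact ⟨⟨Seminorm.of f add smul, rfl⟩, fun x => (eq_zero x).1⟩
  · rintro ⟨⟨p, rfl⟩, eq_zero⟩
    exact ⟨apply_nonneg p, fun x => ⟨eq_zero x, fun hx => hx ▸ map_zero p⟩, map_smul_eq_mul p,
      map_add_le_add p⟩

theorem compatibleNorms_iff {P : ℝ → Y →L[ℝ] Y} {nn : ℝ → Y → ℝ} :
    CompatibleNorms P nn ↔ CompatibleSeminorms (fun t => (P t : Y →ₗ[ℝ] Y)) nn := by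
  refine and_congr_left fun ⟨N, _, hnn⟩ => forall₂_congr fun t ht => ?_
  have definite (x : Y) (hx : nn t x = 0) : x = 0 :=
    norm_le_zero_iff.1 ((hnn t ht x).1.trans_eq hx)
  exact isNormOn_iff.trans (and_iff_left definite)

theorem EvolutionOperator.evolutionSplitting {U V : ℝ → ℝ → Y →L[ℝ] Y} {P : ℝ → Y →L[ℝ] Y}
    (hU : EvolutionOperator U) (hP : ProjectorFamily P) (hUP : InvariantFor U P)
    (map_inv : ∀ t s : ℝ, 0 ≤ s → s ≤ t → ∀ x : Y, U t s (V t s (x - P t x)) = x - P t x)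
    (inv_map : ∀ t s : ℝ, 0 ≤ s → s ≤ t → ∀ x : Y, V t s (U t s (x - P s x)) = x - P s x)
    (compl_inv : ∀ t s : ℝ, 0 ≤ s → s ≤ t → ∀ x : Y,
      V t s (x - P t x) = V t s (x - P t x) - P s (V t s (x - P t x))) :
    EvolutionSplitting (fun t s => (U t s : Y →ₗ[ℝ] Y)) (fun t s => (V t s : Y →ₗ[ℝ] Y))
      (fun t => (P t : Y →ₗ[ℝ] Y)) where
  map_self t ht x := DFunLike.congr_fun (hU.1 t ht) x
  map_map t s r hr hrs hst x := (DFunLike.congr_fun (hU.2 t s r hr hrs hst) x).symm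
  proj_proj t ht x := DFunLike.congr_fun (hP t ht) x
  map_proj := hUP
  map_inv := map_inv
  inv_map := inv_map
  proj_inv t s hs hst x := sub_eq_self.1 (compl_inv t s hs hst x).symm

end RealNormedSpace

/-- Corollary 3.8 : `(U,P)` is exponentially dichotomic iff there exist a family
of norms compatible with `P` and constants `α, β > 0` satisfying `(ed₁)`, `(ed₂)`. -/
theorem stmt8 (U V : ℝ → ℝ → X →L[ℝ] X) (P : ℝ → X →L[ℝ] X)
    (hU : EvolutionOperator U) (hP : ProjectorFamily P) (hC : CompatibleWith U P)
    (hv1 : ∀ t s : ℝ, 0 ≤ s → s ≤ t → ∀ x : X, U t s (V t s (x - P t x)) = x - P t x)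
    (hv2 : ∀ t s : ℝ, 0 ≤ s → s ≤ t → ∀ x : X, V t s (U t s (x - P s x)) = x - P s x)
    (hv3 : ∀ t s t₀ : ℝ, 0 ≤ t₀ → t₀ ≤ s → s ≤ t → ∀ x : X,
      V t t₀ (x - P t x) = V s t₀ (V t s (x - P t x)))
    (hv4 : ∀ t s : ℝ, 0 ≤ s → s ≤ t → ∀ x : X,
      V t s (x - P t x) = V t s (x - P t x) - P s (V t s (x - P t x)))
    :
    (∃ α β : ℝ, 0 < α ∧ 0 < β ∧
      Dichotomic U P (fun t => Real.exp (α * t)) (fun t => Real.exp (β * t))) ↔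
      ∃ nn : ℝ → X → ℝ, CompatibleNorms P nn ∧
        ∃ α β : ℝ, 0 < α ∧ 0 < β ∧
          ∀ t s : ℝ, 0 ≤ s → s ≤ t → ∀ x : X,
            nn t (U t s (P s x)) ≤ Real.exp (-α * (t - s)) * nn s (P s x) ∧
            nn s (V t s (x - P t x)) ≤ Real.exp (-β * (t - s)) * nn t (x - P t x) := by
  simp only [compatibleNorms_iff]
  exact stmt8_general (hU.evolutionSplitting hP hC.1 hv1 hv2 hv4)
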